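/- Let X = (1/2)·(a† + a) and P = iħ·(a† − a) in End_ℂ(V) (these satisfy X∘P − P∘X = iħ·id). Let α : ℕ → ℝ be a real sequence with α_0 = 1, set g_α(m,n,s) = (i/2)^s · (m!·n!/((m−s)!·(n−s)!)) · Σ_{k=0}^s (2i)^k · α_k/(s−k)!, and define the linear map Ψ_α : ℂ[x,p] → End_ℂ(V) on the monomial basis by Ψ_α(p^m x^n) = Σ_{s=0}^{min(m,n)} g_α(m,n,s) · ħ^s · P^{m−s} ∘ X^{n−s}. Then for every polynomial A ∈ ℂ[x,p] with real coefficients, the operator Ψ_α(A) is symmetric with respect to the standard basis: for all j, k ∈ ℕ, the j-th component of Ψ_α(A) e_k equals the complex conjugate of the k-th component of Ψ_α(A) e_j. -/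

import Mathlib

open Complex MvPolynomial Finset

noncomputable section

/-- The standard basis vector `e n` of `V = ℕ →₀ ℂ`. -/
def e (n : ℕ) : ℕ →₀ ℂ := Finsupp.single n 1

/-- The destruction operator `a`: `a (e 0) = 0`, `a (e (n+1)) = √(n+1) • e n`. -/
def aop : (ℕ →₀ ℂ) →ₗ[ℂ] (ℕ →₀ ℂ) :=
  Finsupp.lsum ℂ fun n => match n with
    | 0 => 0
    | k + 1 => ((Real.sqrt (k + 1) : ℝ) : ℂ) • Finsupp.lsingle k

/-- The creation operator `a†`: `a† (e n) = √(n+1) • e (n+1)`. -/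
def adop : (ℕ →₀ ℂ) →ₗ[ℂ] (ℕ →₀ ℂ) :=
  Finsupp.lsum ℂ fun n => ((Real.sqrt (n + 1) : ℝ) : ℂ) • Finsupp.lsingle (n + 1)

/-- `F^{(m,n)} = (−iℏ·a)^m ∘ (a†)^n` as an element of `End_ℂ(V)`. -/
def F (ℏ : ℝ) (m n : ℕ) : Module.End ℂ (ℕ →₀ ℂ) :=
  ((-(Complex.I * ℏ)) • (aop : Module.End ℂ (ℕ →₀ ℂ))) ^ m * (adop : Module.End ℂ (ℕ →₀ ℂ)) ^ n

/-- The polynomial algebra ℂ[x,p] in two commuting variables. -/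
abbrev Pxp := MvPolynomial (Fin 2) ℂ

/-- The variable `x`. -/
def xv : Pxp := X 0
/-- The variable `p`. -/
def pv : Pxp := X 1

/-- The partial derivative `∂_x` as a linear endomorphism. -/
def Dx : Module.End ℂ Pxp := (pderiv (0 : Fin 2)).toLinearMap
/-- The partial derivative `∂_p` as a linear endomorphism. -/
def Dp : Module.End ℂ Pxp := (pderiv (1 : Fin 2)).toLinearMap

/-- The position operator `X = ½(a† + a)`. -/
def Xop : Module.End ℂ (ℕ →₀ ℂ) :=
  (1 / 2 : ℂ) • ((adop : Module.End ℂ (ℕ →₀ ℂ)) + (aop : Module.End ℂ (ℕ →₀ ℂ)))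

/-- The momentum operator `P = iℏ(a† − a)`. -/
def Pop (ℏ : ℝ) : Module.End ℂ (ℕ →₀ ℂ) :=
  (Complex.I * ℏ) • ((adop : Module.End ℂ (ℕ →₀ ℂ)) - (aop : Module.End ℂ (ℕ →₀ ℂ)))

/-- `g_α(m,n,s) = (i/2)^s (m!n!/((m−s)!(n−s)!)) Σ_{k=0}^s (2i)^k α_k/(s−k)!`. -/
def gα (α : ℕ → ℝ) (m n s : ℕ) : ℂ :=
  (Complex.I / 2) ^ s *
    ((m.factorial * n.factorial : ℂ) / ((m - s).factorial * (n - s).factorial)) *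
    ∑ k ∈ Finset.range (s + 1), (2 * Complex.I) ^ k * (α k : ℂ) / ((s - k).factorial : ℂ)

/-!
Normal ordering turns the symmetrized (Weyl-ordered) monomial `W (m, n)` in `P` and `X` into
`∑ₛ (iℏ/2)ˢ (m)ₛ (n)ₛ / s! · P^(m-s) X^(n-s)`, where `(m)ₛ` is a falling factorial. Splitting
`s = k + t` in the double sum that defines `Ψ_α (p^m x^n)` and using `(m)ₖ₊ₜ = (m)ₖ (m - k)ₜ`, the
sum over `t` is such a normal-ordered expansion, while the powers of `i` attached to `k` combine
to `(i/2)ᵏ (2i)ᵏ = (-1)ᵏ`. Hence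
`Ψ_α (p^m x^n) = ∑ₖ (-ℏ)ᵏ αₖ (m)ₖ (n)ₖ · W (m - k, n - k)`
is a real combination of Weyl-ordered monomials, and these are symmetric because `X` and `P` are.
-/

theorem commutator_half_smul_add_smul_sub {K R : Type*} [Field K] [CharZero K] [Ring R]
    [Algebra K R] (a b : R) (c : K) :
    ((1 / 2 : K) • (b + a)) * (c • (b - a)) - (c • (b - a)) * ((1 / 2 : K) • (b + a)) =
      c • (a * b - b * a) := by
  simp only [smul_mul_smul_comm, mul_add, add_mul, mul_sub, sub_mul]
  module

theorem pow_mul_of_commutator_eq_smul_one {K R : Type*} [CommRing K] [Ring R] [Algebra K R]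
    {x p : R} {c : K} (hc : x * p - p * x = c • (1 : R)) (n : ℕ) :
    x ^ n * p = p * x ^ n + (c * n) • x ^ (n - 1) := by
  have hxp : x * p = p * x + c • (1 : R) := sub_eq_iff_eq_add'.mp hc
  induction n with
  | zero => simp
  | succ n ih =>
    have hpow : (n : K) • (x ^ (n - 1) * x) = (n : K) • x ^ n := by
      cases n <;> simp [pow_succ]
    calc x ^ (n + 1) * p = x ^ n * p * x + c • x ^ n := by
          rw [pow_succ, mul_assoc, hxp, mul_add, mul_smul_comm, mul_one, mul_assoc]
      _ = p * x ^ (n + 1) + c • (n : K) • (x ^ (n - 1) * x) + c • x ^ n := by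
          rw [ih, add_mul, mul_assoc, ← pow_succ, smul_mul_assoc, mul_smul]
      _ = p * x ^ (n + 1) + (c * (n + 1 : ℕ)) • x ^ (n + 1 - 1) := by
          rw [hpow, Nat.add_sub_cancel]
          push_cast
          module

section WeylMonomial

/-- The Weyl-ordered monomial of degree `m` in `p` and `n` in `x`, obtained from `x ^ n` by
symmetrizing `m` times with `p`, that is, by iterating the Jordan product `w ↦ (p w + w p) / 2`. -/
def weylMonomial (K : Type*) {R : Type*} [Field K] [Ring R] [Algebra K R] (x p : R) : ℕ → ℕ → R
  | 0, n => x ^ n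
  | m + 1, n => (2⁻¹ : K) • (p * weylMonomial K x p m n + weylMonomial K x p m n * p)

variable {K R : Type*} [Field K] [Ring R] [Algebra K R] {x p : R} {c : K}

theorem weylMonomial_mul (hc : x * p - p * x = c • (1 : R)) (m n : ℕ) :
    weylMonomial K x p m n * p =
      p * weylMonomial K x p m n + (c * n) • weylMonomial K x p m (n - 1) := by
  induction m generalizing n with
  | zero => exact pow_mul_of_commutator_eq_smul_one hc n
  | succ m ih =>
    simp only [weylMonomial, add_mul, mul_add, smul_mul_assoc, mul_smul_comm, mul_assoc, ih,
      smul_add]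
    module

variable [CharZero K]

theorem weylMonomial_succ (hc : x * p - p * x = c • (1 : R)) (m n : ℕ) :
    weylMonomial K x p (m + 1) n =
      p * weylMonomial K x p m n + (c / 2 * n) • weylMonomial K x p m (n - 1) := by
  rw [weylMonomial, weylMonomial_mul hc]
  module

theorem weylMonomial_eq_sum_antidiagonal (hc : x * p - p * x = c • (1 : R)) (m n : ℕ) :
    weylMonomial K x p m n = ∑ ij ∈ antidiagonal m, m.choose ij.1 •
      ((c / 2) ^ ij.1 * n.descFactorial ij.1) • (p ^ ij.2 * x ^ (n - ij.1)) := by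
  induction m generalizing n with
  | zero => simp [weylMonomial]
  | succ m ih =>
    rw [weylMonomial_succ hc, ih, ih, sum_antidiagonal_choose_succ_nsmul
      (fun i j ↦ ((c / 2) ^ i * n.descFactorial i) • (p ^ j * x ^ (n - i))), mul_sum, smul_sum]
    congr 1
    · refine sum_congr rfl fun ij _ ↦ ?_
      rw [mul_smul_comm, mul_smul_comm, ← mul_assoc, ← pow_succ']
    · refine sum_congr rfl fun ij hij ↦ ?_
      have hdesc : (n.descFactorial (ij.1 + 1) : K) = n * (n - 1).descFactorial ij.1 := by
        rw [← Nat.descFactorial_mul_descFactorial (Nat.le_add_left 1 ij.1), Nat.add_sub_cancel,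
          Nat.descFactorial_one, mul_comm, Nat.cast_mul]
      rw [Nat.choose_symm_of_eq_add (mem_antidiagonal.mp hij).symm, hdesc, smul_comm, smul_smul,
        Nat.sub_sub, add_comm 1]
      congr 2
      ring

theorem weylMonomial_eq_sum_range (hc : x * p - p * x = c • (1 : R)) (m n : ℕ) :
    weylMonomial K x p m n = ∑ s ∈ range (min m n + 1),
      ((c / 2) ^ s * (m.descFactorial s * n.descFactorial s) / s.factorial) •
        (p ^ (m - s) * x ^ (n - s)) := by
  rw [weylMonomial_eq_sum_antidiagonal hc, Nat.sum_antidiagonal_eq_sum_range_succ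
    (fun i j ↦ m.choose i • ((c / 2) ^ i * n.descFactorial i : K) • (p ^ j * x ^ (n - i)))]
  symm
  refine sum_subset_zero_on_sdiff (range_mono (by lia)) (fun s hs ↦ ?_) fun s _ ↦ ?_
  · have hns : n < s := by simp only [mem_sdiff, mem_range] at hs; lia
    simp [Nat.descFactorial_of_lt hns]
  · have hs0 : (s.factorial : K) ≠ 0 := mod_cast s.factorial_ne_zero
    rw [← Nat.cast_smul_eq_nsmul K, smul_smul, Nat.descFactorial_eq_factorial_mul_choose m]
    congr 1
    push_cast
    field_simp

end WeylMonomial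

section Quantization

theorem gα_eq_sum_descFactorial (α : ℕ → ℝ) {m n s : ℕ} (hm : s ≤ m) (hn : s ≤ n) :
    gα α m n s = ∑ k ∈ range (s + 1),
      (I / 2) ^ s * (m.descFactorial s * n.descFactorial s) *
        ((2 * I) ^ k * α k / (s - k).factorial) := by
  have hm0 : ((m - s).factorial : ℂ) ≠ 0 := mod_cast (m - s).factorial_ne_zero
  have hn0 : ((n - s).factorial : ℂ) ≠ 0 := mod_cast (n - s).factorial_ne_zero
  rw [gα, ← mul_sum, ← Nat.factorial_mul_descFactorial hm, ← Nat.factorial_mul_descFactorial hn]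
  congr 2
  push_cast
  field_simp

theorem quantization_coeff_eq (ℏ a : ℝ) (m n k t : ℕ) :
    (I / 2) ^ (k + t) * (m.descFactorial (k + t) * n.descFactorial (k + t)) *
        ((2 * I) ^ k * a / t.factorial) * (ℏ : ℂ) ^ (k + t) =
      (((-ℏ) ^ k * a * (m.descFactorial k * n.descFactorial k) : ℝ) : ℂ) *
        ((I * ℏ / 2) ^ t * ((m - k).descFactorial t * (n - k).descFactorial t) / t.factorial) := by
  have hI : (I / 2) ^ k * (2 * I) ^ k = (-1) ^ k := by
    rw [← mul_pow]
    congr 1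
    linear_combination I_mul_I
  have hdesc (l : ℕ) : l.descFactorial (k + t) = (l - k).descFactorial t * l.descFactorial k := by
    rw [← Nat.descFactorial_mul_descFactorial (Nat.le_add_right k t), Nat.add_sub_cancel_left]
  rw [hdesc, hdesc, mul_div_right_comm I, mul_pow (I / 2), pow_add, pow_add]
  push_cast
  rw [neg_pow, ← hI]
  ring

theorem sum_gα_smul_eq_sum_weylMonomial {R : Type*} [Ring R] [Algebra ℂ R] {x p : R} {ℏ : ℝ}
    (hc : x * p - p * x = (I * ℏ) • (1 : R)) (α : ℕ → ℝ) (m n : ℕ) :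
    ∑ s ∈ range (min m n + 1), (gα α m n s * (ℏ : ℂ) ^ s) • (p ^ (m - s) * x ^ (n - s)) =
      ∑ k ∈ range (min m n + 1),
        (((-ℏ) ^ k * α k * (m.descFactorial k * n.descFactorial k) : ℝ) : ℂ) •
          weylMonomial ℂ x p (m - k) (n - k) := by
  let term (k t : ℕ) : R :=
    ((I / 2) ^ (k + t) * (m.descFactorial (k + t) * n.descFactorial (k + t)) *
      ((2 * I) ^ k * α k / t.factorial) * (ℏ : ℂ) ^ (k + t)) •
        (p ^ (m - (k + t)) * x ^ (n - (k + t)))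
  calc
    _ = ∑ s ∈ range (min m n + 1), ∑ k ∈ range (s + 1), term k (s - k) := by
      refine sum_congr rfl fun s hs ↦ ?_
      rw [mem_range] at hs
      rw [gα_eq_sum_descFactorial α (by lia) (by lia), sum_mul, sum_smul]
      refine sum_congr rfl fun k hk ↦ ?_
      simp only [term, Nat.add_sub_of_le (mem_range_succ_iff.mp hk)]
    _ = ∑ k ∈ range (min m n + 1), ∑ t ∈ range (min m n + 1 - k), term k t :=
      sum_range_diag_flip _ _
    _ = _ := by
      refine sum_congr rfl fun k hk ↦ ?_
      have hrange : min m n + 1 - k = min (m - k) (n - k) + 1 := by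
        rw [mem_range] at hk
        lia
      rw [weylMonomial_eq_sum_range hc, smul_sum, hrange]
      refine sum_congr rfl fun t _ ↦ ?_
      rw [smul_smul, Nat.sub_sub, Nat.sub_sub, ← quantization_coeff_eq]

end Quantization

section SelfAdjoint

variable {M : Type*} [AddCommGroup M] [Module ℂ M]

/-- The operators that are self-adjoint for a sesquilinear form `B`, as a real subspace of the
complex space of all operators. -/
def selfAdjointRealSubmodule (B : M →ₗ[ℂ] M →ₗ⋆[ℂ] ℂ) : Submodule ℝ (Module.End ℂ M) where
  carrier := {T | B.IsSelfAdjoint T}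
  zero_mem' := LinearMap.isAdjointPair_zero
  add_mem' hS hT := LinearMap.IsAdjointPair.add hS hT
  smul_mem' r T hT v w := by
    change B ((r : ℂ) • T v) w = B v ((r : ℂ) • T w)
    rw [map_smul, LinearMap.smul_apply, map_smulₛₗ, conj_ofReal, hT v w]

variable {B : M →ₗ[ℂ] M →ₗ⋆[ℂ] ℂ} {S T X P : Module.End ℂ M}

theorem add_mem_selfAdjointRealSubmodule_of_isAdjointPair (hST : LinearMap.IsAdjointPair B B S T)
    (hTS : LinearMap.IsAdjointPair B B T S) : S + T ∈ selfAdjointRealSubmodule B := by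
  have hadd : LinearMap.IsAdjointPair B B (S + T) (T + S) := hST.add hTS
  rwa [add_comm (T : M → M)] at hadd

theorem I_smul_sub_mem_selfAdjointRealSubmodule_of_isAdjointPair
    (hST : LinearMap.IsAdjointPair B B S T) (hTS : LinearMap.IsAdjointPair B B T S) :
    I • (S - T) ∈ selfAdjointRealSubmodule B := by
  intro v w
  simp only [LinearMap.smul_apply, LinearMap.sub_apply, map_smul, map_sub, map_smulₛₗ, conj_I,
    hST v w, hTS v w, smul_eq_mul]
  ring

theorem pow_mem_selfAdjointRealSubmodule (hT : T ∈ selfAdjointRealSubmodule B) (n : ℕ) :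
    T ^ n ∈ selfAdjointRealSubmodule B := by
  induction n with
  | zero => exact LinearMap.isAdjointPair_one
  | succ n ih =>
    have hmul : LinearMap.IsAdjointPair B B (T ^ n * T) (T * T ^ n) :=
      LinearMap.IsAdjointPair.mul ih hT
    rwa [← pow_succ, ← pow_succ'] at hmul

theorem weylMonomial_mem_selfAdjointRealSubmodule (hX : X ∈ selfAdjointRealSubmodule B)
    (hP : P ∈ selfAdjointRealSubmodule B) (m n : ℕ) :
    weylMonomial ℂ X P m n ∈ selfAdjointRealSubmodule B := by
  induction m with
  | zero => exact pow_mem_selfAdjointRealSubmodule hX n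
  | succ m ih =>
    have hjordan := add_mem_selfAdjointRealSubmodule_of_isAdjointPair
      (LinearMap.IsAdjointPair.mul hP ih) (LinearMap.IsAdjointPair.mul ih hP)
    rw [weylMonomial, ← ofReal_ofNat, ← ofReal_inv]
    exact Submodule.smul_mem _ _ hjordan

theorem sum_gα_smul_mem_selfAdjointRealSubmodule {ℏ : ℝ} (hX : X ∈ selfAdjointRealSubmodule B)
    (hP : P ∈ selfAdjointRealSubmodule B)
    (hc : X * P - P * X = (I * ℏ) • (1 : Module.End ℂ M)) (α : ℕ → ℝ) (m n : ℕ) :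
    ∑ s ∈ range (min m n + 1), (gα α m n s * (ℏ : ℂ) ^ s) • (P ^ (m - s) * X ^ (n - s)) ∈
      selfAdjointRealSubmodule B := by
  rw [sum_gα_smul_eq_sum_weylMonomial hc]
  exact sum_mem fun k _ ↦
    Submodule.smul_mem _ _ (weylMonomial_mem_selfAdjointRealSubmodule hX hP _ _)

end SelfAdjoint

theorem map_mem_of_coeff_im_eq_zero {N : Type*} [AddCommGroup N] [Module ℂ N] (S : Submodule ℝ N)
    (Φ : Pxp →ₗ[ℂ] N) (hΦ : ∀ m n : ℕ, Φ (pv ^ m * xv ^ n) ∈ S) {A : Pxp}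
    (hA : ∀ d : Fin 2 →₀ ℕ, (coeff d A).im = 0) : Φ A ∈ S := by
  rw [A.as_sum, map_sum]
  refine sum_mem fun d _ ↦ ?_
  have hmonomial : monomial d (coeff d A) = ((coeff d A).re : ℂ) • (pv ^ d 1 * xv ^ d 0) := by
    rw [← Complex.ext (ofReal_re _) ((ofReal_im _).trans (hA d).symm), monomial_eq,
      Finsupp.prod_fintype _ _ (by simp), Fin.prod_univ_two, smul_eq_C_mul, pv, xv, ofReal_re,
      mul_comm (MvPolynomial.X 0 ^ _)]
  rw [hmonomial, map_smul]
  exact S.smul_mem _ (hΦ _ _)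

section StdForm

/-- The standard sesquilinear form `(v, w) ↦ ∑ i, v i * star (w i)` on finitely supported families.
It is linear in the first and conjugate-linear in the second argument. -/
def stdForm (R ι : Type*) [CommSemiring R] [StarRing R] : (ι →₀ R) →ₗ[R] (ι →₀ R) →ₗ⋆[R] R :=
  Finsupp.linearCombination R fun i ↦ (starRingEnd R).toSemilinearMap.comp (Finsupp.lapply i)

variable {R ι : Type*} [CommSemiring R] [StarRing R]

theorem stdForm_single_left (i : ι) (w : ι →₀ R) :
    stdForm R ι (Finsupp.single i 1) w = starRingEnd R (w i) := by
  simp [stdForm]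

theorem stdForm_single_right (v : ι →₀ R) (i : ι) :
    stdForm R ι v (Finsupp.single i 1) = v i := by
  classical
  simp +contextual [stdForm, Finsupp.linearCombination_apply, Finsupp.sum, Finsupp.single_apply]

theorem isAdjointPair_stdForm_iff {S T : Module.End R (ι →₀ R)} :
    LinearMap.IsAdjointPair (stdForm R ι) (stdForm R ι) S T ↔ ∀ j k : ι,
      S (Finsupp.single k 1) j = starRingEnd R (T (Finsupp.single j 1) k) := by
  refine ⟨fun h j k ↦ ?_, fun h ↦ ?_⟩
  · rw [← stdForm_single_right (S _), h, stdForm_single_left]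
  · refine LinearMap.isAdjointPair_iff_comp_eq_compl₂.mpr ?_
    ext k j
    simpa [stdForm_single_right, stdForm_single_left] using h j k

theorem isAdjointPair_stdForm_symm {S T : Module.End R (ι →₀ R)}
    (h : LinearMap.IsAdjointPair (stdForm R ι) (stdForm R ι) S T) :
    LinearMap.IsAdjointPair (stdForm R ι) (stdForm R ι) T S := by
  rw [isAdjointPair_stdForm_iff] at h ⊢
  exact fun j k ↦ by rw [h k j, starRingEnd_self_apply]

end StdForm

section LadderOperators

theorem aop_e_zero : aop (e 0) = 0 := by
  simp [aop, e]

theorem aop_e_succ (n : ℕ) : aop (e (n + 1)) = (√(n + 1) : ℂ) • e n := by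
  simp [aop, e]

theorem adop_e (n : ℕ) : adop (e n) = (√(n + 1) : ℂ) • e (n + 1) := by
  simp [adop, e]

theorem isAdjointPair_adop_aop :
    LinearMap.IsAdjointPair (stdForm ℂ ℕ) (stdForm ℂ ℕ) adop aop := by
  refine isAdjointPair_stdForm_iff.mpr fun j k ↦ ?_
  change adop (e k) j = starRingEnd ℂ (aop (e j) k)
  rw [adop_e]
  cases j with
  | zero =>
    rw [aop_e_zero]
    simp [e]
  | succ j =>
    rw [aop_e_succ]
    obtain rfl | hkj := eq_or_ne k j
    · simp [e]
    · simp [e, hkj, hkj.symm]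

theorem aop_mul_adop_sub_adop_mul_aop :
    aop * adop - adop * aop = (1 : Module.End ℂ (ℕ →₀ ℂ)) := by
  have hsqrt (n : ℕ) : (√(n + 1) : ℂ) * √(n + 1) = n + 1 := by
    rw [← ofReal_mul, Real.mul_self_sqrt (by positivity)]
    simp
  refine Finsupp.lhom_ext' fun n ↦ LinearMap.ext_ring ?_
  change aop (adop (e n)) - adop (aop (e n)) = e n
  rw [adop_e, map_smul, aop_e_succ, smul_smul, hsqrt]
  cases n with
  | zero => simp [aop_e_zero]
  | succ n =>
    rw [aop_e_succ, map_smul, adop_e, smul_smul, hsqrt, ← sub_smul]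
    simp

theorem Xop_mul_Pop_sub_Pop_mul_Xop (ℏ : ℝ) :
    Xop * Pop ℏ - Pop ℏ * Xop = (I * ℏ) • (1 : Module.End ℂ (ℕ →₀ ℂ)) := by
  rw [← aop_mul_adop_sub_adop_mul_aop]
  exact commutator_half_smul_add_smul_sub (R := Module.End ℂ (ℕ →₀ ℂ)) aop adop (I * ℏ)

theorem Xop_mem_selfAdjointRealSubmodule : Xop ∈ selfAdjointRealSubmodule (stdForm ℂ ℕ) := by
  rw [Xop, ← ofReal_one, ← ofReal_ofNat, ← ofReal_div]
  exact Submodule.smul_mem _ _ (add_mem_selfAdjointRealSubmodule_of_isAdjointPair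
    isAdjointPair_adop_aop (isAdjointPair_stdForm_symm isAdjointPair_adop_aop))

theorem Pop_mem_selfAdjointRealSubmodule (ℏ : ℝ) :
    Pop ℏ ∈ selfAdjointRealSubmodule (stdForm ℂ ℕ) := by
  rw [Pop, mul_comm, mul_smul]
  exact Submodule.smul_mem _ _ (I_smul_sub_mem_selfAdjointRealSubmodule_of_isAdjointPair
    isAdjointPair_adop_aop (isAdjointPair_stdForm_symm isAdjointPair_adop_aop))

end LadderOperators

/-- `X` and `P` satisfy `XP − PX = iℏ`, and for a real sequence `α` with
`α 0 = 1`, the map `Ψ_α(p^m x^n) = Σ_s g_α(m,n,s) ℏ^s P^{m−s} X^{n−s}` sends every real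
polynomial to an operator symmetric with respect to the standard basis. -/
theorem stmt16 (ℏ : ℝ) (hℏ : ℏ ≠ 0) (α : ℕ → ℝ) (hα : α 0 = 1)
    (Ψ : Pxp →ₗ[ℂ] Module.End ℂ (ℕ →₀ ℂ))
    (hΨ : ∀ m n : ℕ, Ψ (pv ^ m * xv ^ n) =
      ∑ s ∈ Finset.range (min m n + 1),
        (gα α m n s * (ℏ : ℂ) ^ s) • (Pop ℏ ^ (m - s) * Xop ^ (n - s))) :
    Xop * Pop ℏ - Pop ℏ * Xop = (Complex.I * ℏ) • (1 : Module.End ℂ (ℕ →₀ ℂ)) ∧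
    ∀ A : Pxp, (∀ d : Fin 2 →₀ ℕ, (MvPolynomial.coeff d A).im = 0) →
      ∀ j k : ℕ, (Ψ A (e k)) j = (starRingEnd ℂ) ((Ψ A (e j)) k) := by
  refine ⟨Xop_mul_Pop_sub_Pop_mul_Xop ℏ, fun A hA ↦ isAdjointPair_stdForm_iff.mp ?_⟩
  refine map_mem_of_coeff_im_eq_zero (selfAdjointRealSubmodule (stdForm ℂ ℕ)) Ψ (fun m n ↦ ?_) hA
  rw [hΨ]
  exact sum_gα_smul_mem_selfAdjointRealSubmodule Xop_mem_selfAdjointRealSubmodule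
    (Pop_mem_selfAdjointRealSubmodule ℏ) (Xop_mul_Pop_sub_Pop_mul_Xop ℏ) α m n

end
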